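/- arXiv:1102.4188 — 5 statements merged into one kernel-verified Lean document; each statement's English description precedes it below -/
import Mathlib

section
/- Let n = a + b = x + y + z for natural numbers a, b, x, y, z, let μ be a nonzero complex number, let ρ be a complex number with ρ³ = 1, let B be an invertible n×n complex matrix, let D be the n×n diagonal matrix with diagonal blocks (I_x, ρ²·I_y, ρ·I_z), and let E be the n×n diagonal matrix with diagonal blocks (I_a, −I_b). Define X₁ = μ·B⁻¹·D·B·E and X₂ = μ·E·B⁻¹·D·B. Then X₁ and X₂ are invertible, they satisfy the braid relation X₁X₂X₁ = X₂X₁X₂, in fact X₁X₂X₁ = X₂X₁X₂ = μ³·E, and (X₁X₂)³ = μ⁶·I_n. -/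
open Matrix

/-- The block-diagonal matrix `diag(I_x, ρ²·I_y, ρ·I_z)` on `Fin n` (where `x + y + z = n`). -/
noncomputable def stdD (n x y : ℕ) (ρ : ℂ) : Matrix (Fin n) (Fin n) ℂ :=
  Matrix.diagonal fun i => if (i : ℕ) < x then 1 else if (i : ℕ) < x + y then ρ ^ 2 else ρ

/-- The block-diagonal matrix `diag(I_a, −I_b)` on `Fin n` (where `a + b = n`). -/
noncomputable def stdE (n a : ℕ) : Matrix (Fin n) (Fin n) ℂ :=
  Matrix.diagonal fun i => if (i : ℕ) < a then (1 : ℂ) else -1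

theorem standard_form_is_braid_representation
    (a b x y z n : ℕ) (hab : a + b = n) (hxyz : x + y + z = n)
    (μ ρ : ℂ) (hμ : μ ≠ 0) (hρ : ρ ^ 3 = 1)
    (B : Matrix (Fin n) (Fin n) ℂ) (hB : IsUnit B) :
    let D := stdD n x y ρ
    let E := stdE n a
    let X₁ := μ • (B⁻¹ * D * B * E)
    let X₂ := μ • (E * (B⁻¹ * D * B))
    IsUnit X₁ ∧ IsUnit X₂ ∧
      X₁ * X₂ * X₁ = X₂ * X₁ * X₂ ∧
      X₁ * X₂ * X₁ = μ ^ 3 • E ∧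
      (X₁ * X₂) ^ 3 = μ ^ 6 • (1 : Matrix (Fin n) (Fin n) ℂ) := by
  intro D E X₁ X₂
  have hE : E * E = 1 := by
    simp only [E, stdE, Matrix.diagonal_mul_diagonal]
    rw [← Matrix.diagonal_one]
    congr 1
    funext i
    split_ifs <;> simp
  have hD : D * D * D = 1 := by
    simp only [D, stdD, Matrix.diagonal_mul_diagonal]
    rw [← Matrix.diagonal_one]
    congr 1
    funext i
    split_ifs
    · simp
    · calc ρ ^ 2 * ρ ^ 2 * ρ ^ 2 = (ρ ^ 3) ^ 2 := by ring
        _ = 1 := by rw [hρ]; simp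
    · rw [← hρ]; ring
  have hBB : B * B⁻¹ = 1 := Matrix.mul_nonsing_inv B ((Matrix.isUnit_iff_isUnit_det B).mp hB)
  have hBB' : B⁻¹ * B = 1 := Matrix.nonsing_inv_mul B ((Matrix.isUnit_iff_isUnit_det B).mp hB)
  obtain ⟨C, hCdef⟩ : ∃ C, C = B⁻¹ * D * B := ⟨_, rfl⟩
  have hC : C * C * C = 1 := by
    calc C * C * C = B⁻¹ * D * (B * B⁻¹) * D * (B * B⁻¹) * D * B := by
          rw [hCdef]; simp only [Matrix.mul_assoc]
      _ = B⁻¹ * (D * D * D) * B := by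
          rw [hBB]; simp only [Matrix.mul_assoc, Matrix.one_mul]
      _ = 1 := by rw [hD, Matrix.mul_one, hBB']
  have h1 : X₁ = μ • (C * E) := by rw [hCdef]
  have h2 : X₂ = μ • (E * C) := by rw [hCdef]
  have h12 : X₁ * X₂ = μ ^ 2 • (C * C) := by
    rw [h1, h2, smul_mul_smul_comm, ← pow_two]
    congr 1
    calc C * E * (E * C) = C * (E * E) * C := by simp only [Matrix.mul_assoc]
      _ = C * C := by rw [hE, Matrix.mul_one]
  have h121 : X₁ * X₂ * X₁ = μ ^ 3 • E := by
    rw [h12, h1, smul_mul_smul_comm, ← Matrix.mul_assoc, hC, Matrix.one_mul, ← pow_succ]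
  have h212 : X₂ * X₁ * X₂ = μ ^ 3 • E := by
    rw [Matrix.mul_assoc, h12, h2, smul_mul_smul_comm, Matrix.mul_assoc, ← Matrix.mul_assoc C,
      hC, Matrix.mul_one, ← pow_succ']
  have h6 : (X₁ * X₂) ^ 3 = μ ^ 6 • (1 : Matrix (Fin n) (Fin n) ℂ) := by
    rw [h12, smul_pow, ← pow_mul]
    congr 1
    calc (C * C) ^ 3 = (C * C * C) * (C * C * C) := by noncomm_ring
      _ = 1 := by rw [hC, Matrix.mul_one]
  have uE : IsUnit E := IsUnit.of_mul_eq_one E hE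
  have uC : IsUnit C := IsUnit.of_mul_eq_one (C * C) (by rw [← Matrix.mul_assoc, hC])
  refine ⟨?_, ?_, h121.trans h212.symm, h121, h6⟩
  · rw [h1]
    exact (uC.mul uE).smul (Units.mk0 μ hμ)
  · rw [h2]
    exact (uE.mul uC).smul (Units.mk0 μ hμ)
end

section
/- There exist invertible 6×6 complex matrices X₁ and X₂ satisfying the braid relation X₁X₂X₁ = X₂X₁X₂ such that trace(X₁⁻²·X₂·X₁⁻¹·X₂·X₁⁻¹·X₂²) ≠ trace(X₂²·X₁⁻¹·X₂·X₁⁻¹·X₂·X₁⁻²). That is, there is a 6-dimensional representation of the three string braid group B₃ that separates the braid b = σ₁⁻²σ₂σ₁⁻¹σ₂σ₁⁻¹σ₂² from its reversed braid b' = σ₂²σ₁⁻¹σ₂σ₁⁻¹σ₂σ₁⁻² by traces. -/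
open Matrix

/-- Integer models of `X₁`, `X₁⁻¹`, `X₂`, `X₂⁻¹`. -/
def braidA : Matrix (Fin 6) (Fin 6) ℤ :=
  !![0, 0, 0, 0, 1, 0; 0, 0, 1, 0, 0, 1; 1, 0, 0, 0, 0, 0;
     0, 1, 0, 0, 0, 0; 0, 0, 0, 0, 0, -1; 0, 0, 0, -1, 0, 0]

def braidA' : Matrix (Fin 6) (Fin 6) ℤ :=
  !![0, 0, 1, 0, 0, 0; 0, 0, 0, 1, 0, 0; 0, 1, 0, 0, 1, 0;
     0, 0, 0, 0, 0, -1; 1, 0, 0, 0, 0, 0; 0, 0, 0, 0, -1, 0]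

def braidB : Matrix (Fin 6) (Fin 6) ℤ :=
  !![0, 1, 0, 0, 0, 0; 0, 0, 0, 0, 0, 1; 1, 0, 0, 1, 0, 0;
     0, 0, 0, 0, -1, 0; 0, 0, 1, 0, 0, 0; 0, 0, 0, -1, 0, 0]

def braidB' : Matrix (Fin 6) (Fin 6) ℤ :=
  !![0, 0, 1, 0, 0, 1; 1, 0, 0, 0, 0, 0; 0, 0, 0, 0, 1, 0;
     0, 0, 0, 0, 0, -1; 0, 0, 0, -1, 0, 0; 0, 1, 0, 0, 0, 0]

theorem braidA_mul : braidA * braidA' = 1 := by decide +kernel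

theorem braidB_mul : braidB * braidB' = 1 := by decide +kernel

theorem braid_rel : braidA * braidB * braidA = braidB * braidA * braidB := by decide +kernel

theorem trace_b : Matrix.trace
    (braidA' ^ 2 * braidB * braidA' * braidB * braidA' * braidB ^ 2) = -3 := by
  simp [pow_two, braidA', braidB, Matrix.trace, Fin.sum_univ_succ]

theorem trace_b' : Matrix.trace
    (braidB ^ 2 * braidA' * braidB * braidA' * braidB * braidA' ^ 2) = 5 := by
  simp [pow_two, braidA', braidB, Matrix.trace, Fin.sum_univ_succ]

theorem exists_six_dimensional_braid_rep_separating_b_from_reverse :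
    ∃ X₁ X₂ : Matrix (Fin 6) (Fin 6) ℂ,
      IsUnit X₁ ∧ IsUnit X₂ ∧
      X₁ * X₂ * X₁ = X₂ * X₁ * X₂ ∧
      Matrix.trace (X₁⁻¹ ^ 2 * X₂ * X₁⁻¹ * X₂ * X₁⁻¹ * X₂ ^ 2) ≠
        Matrix.trace (X₂ ^ 2 * X₁⁻¹ * X₂ * X₁⁻¹ * X₂ * X₁⁻¹ ^ 2) := by
  let f : Matrix (Fin 6) (Fin 6) ℤ →+* Matrix (Fin 6) (Fin 6) ℂ := (Int.castRingHom ℂ).mapMatrix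
  have hA : f braidA * f braidA' = 1 := by rw [← map_mul, braidA_mul, map_one]
  have hB : f braidB * f braidB' = 1 := by rw [← map_mul, braidB_mul, map_one]
  have hinv : (f braidA)⁻¹ = f braidA' := Matrix.inv_eq_right_inv hA
  have htr : ∀ M, Matrix.trace (f M) = ((Matrix.trace M : ℤ) : ℂ) := fun M => by
    simp [f, Matrix.trace]
  refine ⟨f braidA, f braidB, IsUnit.of_mul_eq_one _ hA, IsUnit.of_mul_eq_one _ hB, ?_, ?_⟩
  · simp only [← map_mul, braid_rel]
  · rw [hinv]
    simp only [← map_mul, ← map_pow, htr, trace_b, trace_b']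
    norm_num
end

section
/- Let k ≥ 1 and let A be an invertible k×k complex matrix such that A − I_k is invertible, let B be the 2k×2k block matrix with block rows (I_k, I_k) and (A, I_k), and set Cᵗ = ((A − I_k)⁻¹)ᵀ = ((Aᵀ) − I_k)⁻¹. Then [block-diag(−(Aᵀ)⁻¹, I_k)] · (B⁻¹)ᵀ · [block-diag((Cᵗ)⁻¹·Aᵀ, −(Cᵗ)⁻¹)] is the 2k×2k block matrix with block rows (I_k, I_k) and (Aᵀ, I_k). In other words, (B⁻¹)ᵀ is equivalent under block-diagonal base change on both sides to the matrix of the same normal form with A replaced by Aᵀ. -/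
open Matrix

theorem inverse_transpose_equivalent_to_transposed_normal_form
    (k : ℕ) (hk : 1 ≤ k) (A : Matrix (Fin k) (Fin k) ℂ)
    (hA : IsUnit A) (hA1 : IsUnit (A - 1)) :
    let B := Matrix.fromBlocks (1 : Matrix (Fin k) (Fin k) ℂ) 1 A 1
    let Ct := ((A - 1)⁻¹)ᵀ
    Matrix.fromBlocks (-(Aᵀ)⁻¹) 0 0 1 * (B⁻¹)ᵀ *
        Matrix.fromBlocks (Ct⁻¹ * Aᵀ) 0 0 (-Ct⁻¹) =
      Matrix.fromBlocks (1 : Matrix (Fin k) (Fin k) ℂ) 1 Aᵀ 1 := by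
  intro B Ct
  have hd : IsUnit (A - 1).det := (Matrix.isUnit_iff_isUnit_det _).1 hA1
  have hAt : IsUnit (Aᵀ).det := by
    rw [Matrix.det_transpose]
    exact (Matrix.isUnit_iff_isUnit_det _).1 hA
  have h1 : (A - 1) * (A - 1)⁻¹ = 1 := Matrix.mul_nonsing_inv _ hd
  have hB : B⁻¹ = Matrix.fromBlocks (-(A - 1)⁻¹) (A - 1)⁻¹ (1 + (A - 1)⁻¹) (-(A - 1)⁻¹) := by
    apply Matrix.inv_eq_right_inv
    have h2 : A * (A - 1)⁻¹ = 1 + (A - 1)⁻¹ := by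
      rw [sub_mul, one_mul, sub_eq_iff_eq_add] at h1
      exact h1
    simp only [B, Matrix.fromBlocks_multiply, one_mul, mul_neg, h2]
    rw [← Matrix.fromBlocks_one]
    congr 1 <;> abel
  have hT : Aᵀ - 1 = (A - 1)ᵀ := by rw [Matrix.transpose_sub, Matrix.transpose_one]
  have hCi : Ct⁻¹ = Aᵀ - 1 := by
    apply Matrix.inv_eq_left_inv
    simp only [Ct]
    rw [hT, ← Matrix.transpose_mul,
      Matrix.nonsing_inv_mul _ hd, Matrix.transpose_one]
  have h3 : Ct * (Aᵀ - 1) = 1 := by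
    simp only [Ct]
    rw [hT, ← Matrix.transpose_mul, h1, Matrix.transpose_one]
  have hBt : (B⁻¹)ᵀ = Matrix.fromBlocks (-Ct) (1 + Ct) Ct (-Ct) := by
    rw [hB, Matrix.fromBlocks_transpose]
    simp [Ct]
  have h4 : (Aᵀ)⁻¹ * Aᵀ = 1 := Matrix.nonsing_inv_mul _ hAt
  have h5 : Ct * ((Aᵀ - 1) * Aᵀ) = Aᵀ := by rw [← mul_assoc, h3, one_mul]
  have h6 : (1 + Ct) * (Aᵀ - 1) = Aᵀ := by rw [add_mul, h3, one_mul]; abel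
  rw [hBt, hCi]
  clear_value Ct
  simp only [Matrix.fromBlocks_multiply, zero_mul, mul_zero, add_zero, zero_add, one_mul,
    neg_zero, mul_neg, neg_mul, neg_neg, mul_assoc, h3, h4, h5, h6]
end

section
/- Let k ≥ 1 and let A be an invertible k×k complex matrix such that A − I_k is invertible and A is symmetric (Aᵀ = A), and let B be the 2k×2k block matrix with block rows (I_k, I_k) and (A, I_k). Then with C = (A − I_k)⁻¹, the matrix (B⁻¹)ᵀ equals the block matrix with block rows (−C, I_k + C) and (C, −C), and B = [block-diag(−A⁻¹, I_k)] · (B⁻¹)ᵀ · [block-diag(C⁻¹·A, −C⁻¹)]. Hence B and (B⁻¹)ᵀ lie in the same orbit under block-diagonal base change on both sides. -/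
open Matrix

theorem symmetric_normal_form_fixed_by_inverse_transpose
    (k : ℕ) (hk : 1 ≤ k) (A : Matrix (Fin k) (Fin k) ℂ)
    (hA : IsUnit A) (hA1 : IsUnit (A - 1)) (hsym : Aᵀ = A) :
    let C := (A - 1)⁻¹
    let B := Matrix.fromBlocks (1 : Matrix (Fin k) (Fin k) ℂ) 1 A 1
    (B⁻¹)ᵀ = Matrix.fromBlocks (-C) (1 + C) C (-C) ∧
      B = Matrix.fromBlocks (-A⁻¹) 0 0 1 * (B⁻¹)ᵀ *
          Matrix.fromBlocks (C⁻¹ * A) 0 0 (-C⁻¹) := by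
  intro C B
  have hd : IsUnit (A - 1).det := (Matrix.isUnit_iff_isUnit_det _).1 hA1
  have hdA : IsUnit A.det := (Matrix.isUnit_iff_isUnit_det _).1 hA
  have h1 : (A - 1) * C = 1 := Matrix.mul_nonsing_inv _ hd
  have hCi : C⁻¹ = A - 1 := Matrix.nonsing_inv_nonsing_inv _ hd
  have h2 : C * (A - 1) = 1 := Matrix.nonsing_inv_mul _ hd
  have hAi : A⁻¹ * A = 1 := Matrix.nonsing_inv_mul _ hdA
  have hCt : Cᵀ = C := by
    simp only [C, Matrix.transpose_nonsing_inv, Matrix.transpose_sub, hsym,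
      Matrix.transpose_one]
  have hAC : A * C = 1 + C := by
    rw [← h1]; noncomm_ring
  have hBi : B⁻¹ = Matrix.fromBlocks (-C) C (1 + C) (-C) := by
    apply Matrix.inv_eq_right_inv
    simp only [B, Matrix.fromBlocks_multiply, ← Matrix.fromBlocks_one]
    congr 1
    · noncomm_ring
    · noncomm_ring
    · rw [mul_neg, hAC]; noncomm_ring
    · rw [hAC]; noncomm_ring
  have hT : (B⁻¹)ᵀ = Matrix.fromBlocks (-C) (1 + C) C (-C) := by
    rw [hBi, Matrix.fromBlocks_transpose]
    simp [hCt]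
  refine ⟨hT, ?_⟩
  have e : (1 + C) * (A - 1) = A := by
    rw [add_mul, h2]; noncomm_ring
  rw [hT, hCi]
  simp only [B, Matrix.fromBlocks_multiply]
  congr 1
  · simp [mul_assoc]
    rw [← mul_assoc C, h2, one_mul, hAi]
  · simp only [zero_mul, mul_zero, add_zero, zero_add, neg_mul, mul_neg, neg_neg, neg_zero]
    rw [Matrix.mul_assoc, e, hAi]
  · simp [← mul_assoc, h2]
  · simp only [zero_mul, mul_zero, add_zero, zero_add, neg_mul, mul_neg, neg_neg, one_mul, h2]
end

section
/- Let k ≥ 1 and consider 2k×2k complex matrices. For every B in the Zariski-dense set of invertible 2k×2k matrices whose blocks B₁₁, B₁₂, B₂₂ (k×k blocks, B written with block rows (B₁₁, B₁₂) and (B₂₁, B₂₂)) are invertible and whose associated normal-form matrix A = B₂₁·B₁₁⁻¹·B₁₂·B₂₂⁻¹ is invertible with A − I_k invertible and symmetric, the matrices B and (B⁻¹)ᵀ lie in the same orbit under two-sided multiplication by invertible block-diagonal matrices block-diag(N₁, I or N₂) and block-diag(M₁, M₂) with k×k blocks. -/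
open Matrix

theorem generic_B_and_inverse_transpose_in_same_block_diagonal_orbit
    (k : ℕ) (hk : 1 ≤ k) (B : Matrix (Fin k ⊕ Fin k) (Fin k ⊕ Fin k) ℂ)
    (hB : IsUnit B)
    (h11 : IsUnit B.toBlocks₁₁) (h12 : IsUnit B.toBlocks₁₂) (h22 : IsUnit B.toBlocks₂₂) :
    let A := B.toBlocks₂₁ * B.toBlocks₁₁⁻¹ * B.toBlocks₁₂ * B.toBlocks₂₂⁻¹
    IsUnit A → IsUnit (A - 1) → Aᵀ = A →
      ∃ N₁ N₂ M₁ M₂ : Matrix (Fin k) (Fin k) ℂ,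
        IsUnit N₁ ∧ IsUnit N₂ ∧ IsUnit M₁ ∧ IsUnit M₂ ∧
        (B⁻¹)ᵀ = Matrix.fromBlocks N₁ 0 0 N₂ * B * Matrix.fromBlocks M₁ 0 0 M₂ := by
  intro A hA hA1 hT
  have hAdef : A = B.toBlocks₂₁ * B.toBlocks₁₁⁻¹ * B.toBlocks₁₂ * B.toBlocks₂₂⁻¹ := rfl
  clear_value A
  have hBb := (fromBlocks_toBlocks B).symm
  generalize B.toBlocks₁₁ = a at *
  generalize B.toBlocks₁₂ = b at *
  generalize B.toBlocks₂₁ = c at *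
  generalize B.toBlocks₂₂ = d at *
  have inv : ∀ x : Matrix (Fin k) (Fin k) ℂ, IsUnit x →
      ∃ y, x⁻¹ = y ∧ x * y = 1 ∧ y * x = 1 ∧ IsUnit y := by
    intro x hx
    have hd := (Matrix.isUnit_iff_isUnit_det x).1 hx
    exact ⟨x⁻¹, rfl, mul_nonsing_inv x hd, nonsing_inv_mul x hd, isUnit_nonsing_inv_iff.2 hx⟩
  obtain ⟨a', ea, ha1, ha2, ha⟩ := inv a h11
  obtain ⟨b', eb, hb1, hb2, hb⟩ := inv b h12
  obtain ⟨d', ed, hd1, hd2, hd⟩ := inv d h22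
  obtain ⟨A', eA, hA'1, hA'2, hA'⟩ := inv A hA
  obtain ⟨E, eE, hE1, hE2, hE⟩ := inv (A - 1) hA1
  have hET : Eᵀ = E := by
    rw [← eE, transpose_nonsing_inv, transpose_sub, hT, transpose_one]
  have hcomm : A * E = E * A := by
    have h1 : A * E = 1 + E := by rw [← hE1]; noncomm_ring
    have h2 : E * A = 1 + E := by rw [← hE2]; noncomm_ring
    rw [h1, h2]
  rw [ea, ed] at hAdef
  have hc : A * (d * b' * a) = c := by
    calc A * (d * b' * a) = c * a' * b * (d' * d) * b' * a := by rw [hAdef]; noncomm_ring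
      _ = c * a' * (b * b') * a := by rw [hd2]; noncomm_ring
      _ = c * (a' * a) := by rw [hb1]; noncomm_ring
      _ = c := by rw [ha2, mul_one]
  have canc : ∀ {x y : Matrix (Fin k) (Fin k) ℂ}, x * y = 1 → ∀ z, x * (y * z) = z := by
    intro x y h z; rw [← mul_assoc, h, one_mul]
  have hBN : B = fromBlocks (b * d') 0 0 1 * fromBlocks 1 1 A 1 * fromBlocks (d * b' * a) 0 0 d := by
    rw [hBb]
    simp only [fromBlocks_multiply, mul_zero, zero_mul, add_zero, zero_add, mul_one, one_mul, hc]
    simp only [mul_assoc, canc hd2, canc hb1, hd2, mul_one]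
  have hN' : fromBlocks (d * b') 0 0 1 * fromBlocks (b * d') 0 0 1 = (1 : Matrix (Fin k ⊕ Fin k) (Fin k ⊕ Fin k) ℂ) := by
    simp [fromBlocks_multiply, mul_assoc, canc hb2, hd1]
  have hM' : fromBlocks (d * b' * a) 0 0 d * fromBlocks (a' * b * d') 0 0 d' = (1 : Matrix (Fin k ⊕ Fin k) (Fin k ⊕ Fin k) ℂ) := by
    simp [fromBlocks_multiply, mul_assoc, canc hb2, canc ha1, hd1]
  have hEA : A * E - E = 1 := by rw [← hE1]; noncomm_ring
  have hC : fromBlocks 1 1 A 1 * fromBlocks (-E) E (A * E) (-E) = (1 : Matrix (Fin k ⊕ Fin k) (Fin k ⊕ Fin k) ℂ) := by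
    rw [fromBlocks_multiply, ← fromBlocks_one]
    congr 1
    · refine Eq.trans ?_ hEA; noncomm_ring
    · noncomm_ring
    · noncomm_ring
    · refine Eq.trans ?_ hEA; noncomm_ring
  have hCT : ((fromBlocks 1 1 A 1 : Matrix (Fin k ⊕ Fin k) (Fin k ⊕ Fin k) ℂ)⁻¹)ᵀ
      = fromBlocks (-A) 0 0 1 * fromBlocks 1 1 A 1 * fromBlocks (A' * E) 0 0 (-E) := by
    rw [inv_eq_right_inv hC, fromBlocks_transpose]
    simp [fromBlocks_multiply, hET, hT, canc hA'1, hcomm]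
  have uT : ∀ {x : Matrix (Fin k) (Fin k) ℂ}, IsUnit x → IsUnit xᵀ := fun h => isUnit_transpose _ |>.2 h
  refine ⟨(d * b')ᵀ * (-A) * (d * b'), 1, (a' * b * d') * (A' * E) * (a' * b * d')ᵀ,
    d' * (-E) * d'ᵀ, ((uT (h22.mul hb)).mul hA.neg).mul (h22.mul hb), isUnit_one,
    (((ha.mul h12).mul hd).mul (hA'.mul hE)).mul (uT ((ha.mul h12).mul hd)),
    (hd.mul hE.neg).mul (uT hd), ?_⟩
  have e1 : fromBlocks ((d * b')ᵀ * (-A) * (d * b')) 0 0 1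
      = (fromBlocks (d * b') 0 0 1)ᵀ * fromBlocks (-A) 0 0 1 * fromBlocks (d * b') 0 0 (1 : Matrix (Fin k) (Fin k) ℂ) := by
    simp [fromBlocks_multiply, fromBlocks_transpose]
  have e2 : fromBlocks ((a' * b * d') * (A' * E) * (a' * b * d')ᵀ) 0 0 (d' * (-E) * d'ᵀ)
      = fromBlocks (a' * b * d') 0 0 d' * fromBlocks (A' * E) 0 0 (-E) * (fromBlocks (a' * b * d') 0 0 d')ᵀ := by
    simp [fromBlocks_multiply, fromBlocks_transpose]
  rw [e1, e2, hBN, Matrix.mul_inv_rev, Matrix.mul_inv_rev, transpose_mul, transpose_mul, hCT,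
    inv_eq_left_inv hN', inv_eq_right_inv hM']
  have fin : ∀ N' N M M' P C Q R S : Matrix (Fin k ⊕ Fin k) (Fin k ⊕ Fin k) ℂ,
      N' * N = 1 → M * M' = 1 →
      R * (P * C * Q) * S = R * P * N' * (N * C * M) * (M' * Q * S) := by
    intro N' N M M' P C Q R S h1 h2
    simp only [mul_assoc]
    rw [← mul_assoc N' N, h1, one_mul, ← mul_assoc M M', h2, one_mul]
  rw [← fin _ _ _ _ _ _ _ _ _ hN' hM']
end
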